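/- arXiv:2506.10266 — 11 statements merged into one kernel-verified Lean document; each statement's English description precedes it below -/
import Mathlib

section
/- Let D be a 2-(v,k,λ) design with replication number r and b blocks, where 2 < k < v−1 (D non-trivial). Then b ≥ v and k ≤ r (Fisher's inequality); moreover, if D is non-symmetric (b ≠ v), then b > v and k < r. -/
/-!
The proof is the classical rank argument. Double counting gives `b * k = v * r` and
`r * (k - 1) = lam * (v - 1)`; the latter and `k < v` yield `lam < r`. The linear map sending a
weight function `c : P → ℚ` to its block sums `B ↦ ∑ p ∈ B, c p` is injective: if all block sums
vanish, adding those over the blocks through a point `q` gives `(r - lam) * c q + lam * S = 0`,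
where `S = ∑ p, c p`. Summing over `q` gives `(r - lam + v * lam) * S = 0`, hence `S = 0`, hence
`c = 0`. Comparing dimensions gives `v ≤ b`, and the remaining inequalities follow from
`b * k = v * r`.
-/

/-- A 2-(v,k,λ) design on a finite point set `P`: a collection of `k`-element
subsets of `P` (blocks) such that every pair of distinct points lies in exactly
`lam` blocks (with `lam ≥ 1`). -/
structure TwoDesign (P : Type*) [Fintype P] [DecidableEq P] (v k lam : ℕ) where
  blocks : Finset (Finset P)
  card_points : Fintype.card P = v
  block_card : ∀ B ∈ blocks, B.card = k
  lam_pos : 0 < lam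
  pair_blocks : ∀ p q : P, p ≠ q →
    (blocks.filter fun B => p ∈ B ∧ q ∈ B).card = lam

namespace TwoDesign

variable {P : Type*} [Fintype P] [DecidableEq P] {v k lam r : ℕ}

/-- Flags counted by blocks and by points. -/
lemma card_blocks_mul (D : TwoDesign P v k lam)
    (hr : ∀ p : P, (D.blocks.filter fun B => p ∈ B).card = r) :
    D.blocks.card * k = v * r := by
  have h := Finset.sum_card_bipartiteAbove_eq_sum_card_bipartiteBelow
    (s := (Finset.univ : Finset P)) (t := D.blocks) (fun p B => p ∈ B)
  simp only [Finset.bipartiteAbove, Finset.bipartiteBelow, hr, Finset.filter_univ_mem] at h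
  rw [Finset.sum_congr rfl D.block_card] at h
  simpa [D.card_points] using h.symm

/-- For any weights `c`, the block sums over the blocks through `q` add up to
`(r - lam) * c q + lam * ∑ p, c p`. -/
lemma sum_block_sums (D : TwoDesign P v k lam)
    (hr : ∀ p : P, (D.blocks.filter fun B => p ∈ B).card = r) (c : P → ℚ) (q : P) :
    ∑ B ∈ D.blocks.filter (fun B => q ∈ B), ∑ p ∈ B, c p
      = ((r : ℚ) - lam) * c q + lam * ∑ p, c p := by
  have h1 : ∑ B ∈ D.blocks.filter (fun B => q ∈ B), ∑ p ∈ B, c p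
      = ∑ p, ((D.blocks.filter fun B => q ∈ B ∧ p ∈ B).card : ℚ) * c p := by
    have h2 : ∀ B : Finset P, ∑ p ∈ B, c p = ∑ p, if p ∈ B then c p else 0 := by
      intro B; simp
    simp_rw [h2]
    rw [Finset.sum_comm]
    refine Finset.sum_congr rfl fun p _ => ?_
    rw [← Finset.sum_filter, Finset.filter_filter, Finset.sum_const, nsmul_eq_mul]
  have h3 : ∀ p, ((D.blocks.filter fun B => q ∈ B ∧ p ∈ B).card : ℚ) * c p
      = (if p = q then ((r : ℚ) - lam) * c p else 0) + lam * c p := by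
    intro p
    split_ifs with h
    · subst h
      simp only [and_self, hr]
      ring
    · rw [D.pair_blocks q p (Ne.symm h)]
      ring
  rw [h1, Finset.sum_congr rfl fun p _ => h3 p, Finset.sum_add_distrib, ← Finset.mul_sum]
  simp

lemma lam_lt (D : TwoDesign P v k lam) (hk : 1 < k) (hkv : k < v)
    (hr : ∀ p : P, (D.blocks.filter fun B => p ∈ B).card = r) : lam < r := by
  have hc : 0 < Fintype.card P := by rw [D.card_points]; omega
  obtain ⟨q⟩ := Fintype.card_pos_iff.mp hc
  -- Constant weights `1` give `r * k = (r - lam) + lam * v`.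
  have h := D.sum_block_sums hr (fun _ => 1) q
  have h2 : ∑ B ∈ D.blocks.filter (fun B => q ∈ B), ∑ p ∈ B, (1 : ℚ) = r * k := by
    rw [Finset.sum_congr rfl (g := fun _ => (k : ℚ))]
    · simp [hr]
    · intro B hB
      simp [D.block_card B (Finset.mem_filter.mp hB).1]
  rw [h2] at h
  simp only [Finset.sum_const, Finset.card_univ, D.card_points, nsmul_eq_mul, mul_one] at h
  have hl : (0 : ℚ) < lam := by exact_mod_cast D.lam_pos
  have hk' : (1 : ℚ) < k := by exact_mod_cast hk
  have hkv' : (k : ℚ) < v := by exact_mod_cast hkv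
  by_contra hcon
  have hle : (r : ℚ) ≤ lam := by exact_mod_cast not_lt.mp hcon
  nlinarith

/-- The map from point weights to block sums is injective, so there are at least as many blocks as
points. -/
lemma le_card_blocks (D : TwoDesign P v k lam) (hk : 1 < k) (hkv : k < v)
    (hr : ∀ p : P, (D.blocks.filter fun B => p ∈ B).card = r) : v ≤ D.blocks.card := by
  have hlt : (lam : ℚ) < r := by exact_mod_cast D.lam_lt hk hkv hr
  let f : (P → ℚ) →ₗ[ℚ] (D.blocks → ℚ) :=
    { toFun := fun c B => ∑ p ∈ B.1, c p
      map_add' := by intro c d; ext B; simp [Finset.sum_add_distrib]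
      map_smul' := by intro a c; ext B; simp [Finset.mul_sum] }
  have hf : Function.Injective f := by
    refine (injective_iff_map_eq_zero f).mpr fun c hc => ?_
    have hB : ∀ B ∈ D.blocks, ∑ p ∈ B, c p = 0 := fun B hB => congrFun hc ⟨B, hB⟩
    have hq : ∀ q, ((r : ℚ) - lam) * c q + lam * ∑ p, c p = 0 := fun q => by
      rw [← D.sum_block_sums hr c q]
      exact Finset.sum_eq_zero fun B h => hB B (Finset.mem_filter.mp h).1
    have hS : ((r : ℚ) - lam + v * lam) * ∑ p, c p = 0 := by
      have h := Finset.sum_eq_zero (s := Finset.univ) fun q _ => hq q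
      rw [Finset.sum_add_distrib, ← Finset.mul_sum] at h
      simp only [Finset.sum_const, Finset.card_univ, D.card_points, nsmul_eq_mul] at h
      linarith
    have hpos : (r : ℚ) - lam + v * lam ≠ 0 := by
      have : (0 : ℚ) ≤ v * lam := by positivity
      linarith
    have hS0 := (mul_eq_zero.mp hS).resolve_left hpos
    ext q
    have h := hq q
    rw [hS0, mul_zero, add_zero] at h
    exact (mul_eq_zero.mp h).resolve_left (sub_ne_zero.mpr hlt.ne')
  have h := LinearMap.finrank_le_finrank_of_injective hf
  simpa [D.card_points] using h

end TwoDesign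

/-- Fisher's inequality, with the strict version in the non-symmetric case. -/
theorem stmt_1 {P : Type*} [Fintype P] [DecidableEq P] {v k lam r b : ℕ}
    (D : TwoDesign P v k lam)
    (hnt : 2 < k ∧ k < v - 1)
    (hr : ∀ p : P, (D.blocks.filter fun B => p ∈ B).card = r)
    (hb : D.blocks.card = b) :
    (v ≤ b ∧ k ≤ r) ∧ (b ≠ v → v < b ∧ k < r) := by
  have hv : v ≤ b := hb ▸ D.le_card_blocks (by omega) (by omega) hr
  have hbk : b * k = v * r := hb ▸ D.card_blocks_mul hr
  have hv0 : 0 < v := by omega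
  have hk0 : 0 < k := by omega
  refine ⟨⟨hv, ?_⟩, fun hne => ?_⟩
  · exact Nat.le_of_mul_le_mul_left (hbk ▸ Nat.mul_le_mul_right k hv) hv0
  · have hlt : v < b := lt_of_le_of_ne hv hne.symm
    exact ⟨hlt, Nat.lt_of_mul_lt_mul_left (hbk ▸ Nat.mul_lt_mul_of_pos_right hlt hk0)⟩
end

section
/- Let D be a non-trivial 2-(v,k,λ) design with replication number r, let G be a flag-transitive group of automorphisms of D, and let α be a point of D. Then r divides λ·gcd(v−1, |G_α|). -/
/-- The double count of pairs `(q, B)` with `q ≠ α` and `α, q ∈ B`. -/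
theorem TwoDesign.replication_mul {P : Type*} [Fintype P] [DecidableEq P] {v k lam : ℕ}
    (D : TwoDesign P v k lam) (α : P) :
    (D.blocks.filter fun B => α ∈ B).card * (k - 1) = lam * (v - 1) := by
  have h := Finset.sum_card_bipartiteAbove_eq_sum_card_bipartiteBelow
    (s := Finset.univ.erase α) (t := D.blocks.filter fun B => α ∈ B) (fun q B => q ∈ B)
  have h1 : ∀ q ∈ Finset.univ.erase α, (Finset.bipartiteAbove (fun (q : P) B => q ∈ B)
      (D.blocks.filter fun B => α ∈ B) q).card = lam := by
    intro q hq
    rw [Finset.bipartiteAbove, Finset.filter_filter]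
    exact D.pair_blocks α q (Finset.ne_of_mem_erase hq).symm
  have h2 : ∀ B ∈ D.blocks.filter (fun B => α ∈ B), (Finset.bipartiteBelow
      (fun (q : P) B => q ∈ B) (Finset.univ.erase α) B).card = k - 1 := by
    intro B hB
    obtain ⟨hB, hα⟩ := Finset.mem_filter.1 hB
    have he : Finset.bipartiteBelow (fun (q : P) B => q ∈ B) (Finset.univ.erase α) B
        = B.erase α := by
      ext x
      simp [Finset.bipartiteBelow]
    rw [he, Finset.card_erase_of_mem hα, D.block_card B hB]
  rw [Finset.sum_congr rfl h1, Finset.sum_congr rfl h2] at h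
  simp only [Finset.sum_const, smul_eq_mul, Finset.card_erase_of_mem (Finset.mem_univ α),
    Finset.card_univ, D.card_points] at h
  rw [← h, mul_comm]

/-- If `G` is a flag-transitive group of automorphisms of a non-trivial
2-(v,k,λ) design with replication number `r`, then `r ∣ λ·gcd(v−1, |G_α|)`. -/
theorem stmt_3 {P : Type*} [Fintype P] [DecidableEq P] {v k lam r : ℕ}
    (D : TwoDesign P v k lam)
    (hnt : 2 < k ∧ k < v - 1)
    (hr : ∀ p : P, (D.blocks.filter fun B => p ∈ B).card = r)
    (G : Type*) [Group G] [Fintype G] [MulAction G P]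
    (hact : ∀ (g : G), ∀ B ∈ D.blocks, B.image (fun p => g • p) ∈ D.blocks)
    (hflag : ∀ (p₁ p₂ : P) (B₁ B₂ : Finset P), B₁ ∈ D.blocks → B₂ ∈ D.blocks →
      p₁ ∈ B₁ → p₂ ∈ B₂ → ∃ g : G, g • p₁ = p₂ ∧ B₁.image (fun p => g • p) = B₂)
    (α : P) :
    r ∣ lam * Nat.gcd (v - 1) (Nat.card (MulAction.stabilizer G α)) := by
  open scoped Pointwise in
  have hdvd : r ∣ lam * (v - 1) := ⟨k - 1, by rw [← D.replication_mul α, hr α]⟩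
  have hv : 1 < Fintype.card P := by rw [D.card_points]; omega
  obtain ⟨q, hq⟩ := Fintype.exists_ne_of_one_lt_card hv α
  -- Since `λ > 0`, some block `B` passes through `α`.
  obtain ⟨B, hB⟩ := Finset.card_pos.1 ((D.pair_blocks α q hq.symm).symm ▸ D.lam_pos)
  obtain ⟨hB, hαB, -⟩ := Finset.mem_filter.1 hB
  have horb : MulAction.orbit (MulAction.stabilizer G α) B
      = ((D.blocks.filter fun B => α ∈ B : Finset (Finset P)) : Set (Finset P)) := by
    ext C
    rw [Finset.mem_coe, Finset.mem_filter]
    constructor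
    · rintro ⟨⟨g, hg⟩, rfl⟩
      refine ⟨hact g B hB, ?_⟩
      exact Finset.mem_image.2 ⟨α, hαB, hg⟩
    · rintro ⟨hC, hαC⟩
      obtain ⟨g, hg, hgB⟩ := hflag α α B C hB hC hαB hαC
      exact ⟨⟨g, hg⟩, hgB⟩
  have hcard : r ∣ Nat.card (MulAction.stabilizer G α) := by
    have h := (MulAction.stabilizer (MulAction.stabilizer G α) B).index_dvd_card
    rwa [MulAction.index_stabilizer, horb, Set.ncard_coe_finset, hr α] at h
  rw [← Nat.gcd_mul_left]
  exact Nat.dvd_gcd hdvd (hcard.mul_left lam)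
end

section
/- Let D be a non-trivial 2-(v,k,λ) design with replication number r, let G be a flag-transitive group of automorphisms of D, let α be a point of D, and let d be any non-trivial subdegree of G (the length of an orbit of G_α on the points other than α). Then r divides λ·d; in particular r/gcd(r,λ) divides gcd(v−1, d). -/
theorem TwoDesign.mul_eq_mul_card {P : Type*} [Fintype P] [DecidableEq P] {v k lam r c : ℕ}
    (D : TwoDesign P v k lam) {α : P} (hr : (D.blocks.filter fun B => α ∈ B).card = r)
    (S : Finset P) (hS : α ∉ S) (hc : ∀ B ∈ D.blocks, α ∈ B → (S ∩ B).card = c) :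
    r * c = lam * S.card := by
  have key := Finset.card_mul_eq_card_mul (s := D.blocks.filter fun B => α ∈ B) (t := S)
    (fun B γ => γ ∈ B) (m := c) (n := lam) ?_ ?_
  · rw [hr] at key
    rw [key, mul_comm]
  · intro B hB
    rw [Finset.mem_filter] at hB
    rw [← hc B hB.1 hB.2, Finset.bipartiteAbove, Finset.filter_mem_eq_inter]
  · intro γ hγ
    have hne : α ≠ γ := fun h => hS (h ▸ hγ)
    rw [Finset.bipartiteBelow, Finset.filter_filter]
    exact D.pair_blocks α γ hne

theorem div_gcd_dvd_of_dvd_mul {r l n : ℕ} (hr : 0 < r) (h : r ∣ l * n) :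
    r / Nat.gcd r l ∣ n := by
  have hg : 0 < Nat.gcd r l := Nat.gcd_pos_of_pos_left l hr
  refine (Nat.coprime_div_gcd_div_gcd hg).dvd_of_dvd_mul_left ?_
  rw [Nat.div_mul_right_comm (Nat.gcd_dvd_right r l)]
  exact Nat.div_dvd_div (Nat.gcd_dvd_left r l) h

/-- If `G` is a flag-transitive group of automorphisms of a non-trivial
2-(v,k,λ) design with replication number `r`, and `d` is a non-trivial
subdegree of `G` (the length of an orbit of `G_α` on the points other than
`α`), then `r ∣ λ·d`; in particular `r/gcd(r,λ)` divides `gcd(v−1, d)`. -/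
theorem stmt_4 {P : Type*} [Fintype P] [DecidableEq P] {v k lam r d : ℕ}
    (D : TwoDesign P v k lam)
    (hnt : 2 < k ∧ k < v - 1)
    (hr : ∀ p : P, (D.blocks.filter fun B => p ∈ B).card = r)
    (G : Type*) [Group G] [Fintype G] [MulAction G P]
    (hact : ∀ (g : G), ∀ B ∈ D.blocks, B.image (fun p => g • p) ∈ D.blocks)
    (hflag : ∀ (p₁ p₂ : P) (B₁ B₂ : Finset P), B₁ ∈ D.blocks → B₂ ∈ D.blocks →
      p₁ ∈ B₁ → p₂ ∈ B₂ → ∃ g : G, g • p₁ = p₂ ∧ B₁.image (fun p => g • p) = B₂)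
    (α β : P) (hβ : β ≠ α)
    (hd : d = Nat.card (MulAction.orbit (MulAction.stabilizer G α) β)) :
    r ∣ lam * d ∧ (r / Nat.gcd r lam) ∣ Nat.gcd (v - 1) d := by
  classical
  set O : Finset P := (MulAction.orbit (MulAction.stabilizer G α) β).toFinset with hO
  have hOd : O.card = d := by
    rw [hd, hO, Set.toFinset_card, Nat.card_eq_fintype_card]
  have hαO : α ∉ O := by
    rw [hO, Set.mem_toFinset]
    rintro ⟨g, hg⟩
    apply hβ
    have h1 : (g : G) • β = α := hg
    exact MulAction.injective (g : G) (h1.trans g.2.symm)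
  -- Some block contains both `α` and `β`, since `lam > 0`.
  obtain ⟨B₀, hB₀⟩ : (D.blocks.filter fun B => α ∈ B ∧ β ∈ B).Nonempty := by
    rw [← Finset.card_pos, D.pair_blocks α β hβ.symm]
    exact D.lam_pos
  rw [Finset.mem_filter] at hB₀
  have hrpos : 0 < r := by
    rw [← hr α]
    exact Finset.card_pos.2 ⟨B₀, Finset.mem_filter.2 ⟨hB₀.1, hB₀.2.1⟩⟩
  have h1 : r * (O ∩ B₀).card = lam * O.card := by
    refine D.mul_eq_mul_card (hr α) O hαO fun B hB hαB => ?_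
    obtain ⟨g, hg, rfl⟩ := hflag α α B₀ B hB₀.1 hB hB₀.2.1 hαB
    have hgO : O.image (fun p => g • p) = O := by
      refine Finset.eq_of_subset_of_card_le ?_
        (Finset.card_image_of_injective O (MulAction.injective g)).ge
      intro x hx
      obtain ⟨y, hy, rfl⟩ := Finset.mem_image.1 hx
      rw [hO, Set.mem_toFinset] at hy ⊢
      exact MulAction.mem_orbit_of_mem_orbit (⟨g, hg⟩ : MulAction.stabilizer G α) hy
    conv_lhs => rw [← hgO]
    rw [← Finset.image_inter _ _ (MulAction.injective g),
      Finset.card_image_of_injective _ (MulAction.injective g)]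
  have h2 : r * (k - 1) = lam * (v - 1) := by
    have h := D.mul_eq_mul_card (c := k - 1) (hr α) (Finset.univ.erase α)
      (Finset.notMem_erase α _) fun B hB hαB => by
        rw [Finset.erase_inter, Finset.univ_inter, Finset.card_erase_of_mem hαB,
          D.block_card B hB]
    rwa [Finset.card_erase_of_mem (Finset.mem_univ α), Finset.card_univ, D.card_points] at h
  have hrd : r ∣ lam * d := ⟨_, by rw [h1, hOd]⟩
  exact ⟨hrd, Nat.dvd_gcd (div_gcd_dvd_of_dvd_mul hrpos ⟨_, h2.symm⟩)
    (div_gcd_dvd_of_dvd_mul hrpos hrd)⟩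
end

section
/- Let D be a non-trivial quasi-symmetric 2-(v,k,λ) design with block intersection numbers x = 0 and y ≥ 2, with replication number r. Then (y−1)(r−1) = (k−1)(λ−1). -/
/-- A family of blocks is quasi-symmetric with block intersection numbers
`0` and `y` if any two distinct blocks meet in either `0` or `y` points,
and both intersection sizes actually occur. -/
def QuasiSymmetricZero {P : Type*} [DecidableEq P]
    (blocks : Finset (Finset P)) (y : ℕ) : Prop :=
  (∀ B₁ ∈ blocks, ∀ B₂ ∈ blocks, B₁ ≠ B₂ →
    (B₁ ∩ B₂).card = 0 ∨ (B₁ ∩ B₂).card = y) ∧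
  (∃ B₁ ∈ blocks, ∃ B₂ ∈ blocks, B₁ ≠ B₂ ∧ (B₁ ∩ B₂).card = 0) ∧
  (∃ B₁ ∈ blocks, ∃ B₂ ∈ blocks, B₁ ≠ B₂ ∧ (B₁ ∩ B₂).card = y)

/-- For a non-trivial quasi-symmetric 2-(v,k,λ) design with intersection
numbers `0` and `y ≥ 2`: `(y−1)(r−1) = (k−1)(λ−1)`. -/
theorem stmt_5 {P : Type*} [Fintype P] [DecidableEq P] {v k lam r y : ℕ}
    (D : TwoDesign P v k lam)
    (hnt : 2 < k ∧ k < v - 1)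
    (hr : ∀ p : P, (D.blocks.filter fun B => p ∈ B).card = r)
    (hy : 2 ≤ y)
    (hqs : QuasiSymmetricZero D.blocks y) :
    (y - 1) * (r - 1) = (k - 1) * (lam - 1) := by
  obtain ⟨hint, ⟨B, hB, -⟩, -⟩ := hqs
  have hBk := D.block_card B hB
  obtain ⟨p, hp⟩ : B.Nonempty := Finset.card_pos.mp (by omega)
  have key := Finset.card_mul_eq_card_mul (s := (D.blocks.filter fun C => p ∈ C).erase B)
    (t := B.erase p) (m := y - 1) (n := lam - 1) (fun C q => q ∈ C) ?_ ?_
  · rw [Finset.card_erase_of_mem (by simp [hB, hp]), hr, Finset.card_erase_of_mem hp, hBk] at key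
    rw [mul_comm, key]
  · intro C hC
    simp only [Finset.mem_erase, Finset.mem_filter] at hC
    obtain ⟨hCB, hC, hpC⟩ := hC
    have hpBC : p ∈ B ∩ C := Finset.mem_inter.mpr ⟨hp, hpC⟩
    have hcard : (B ∩ C).card = y :=
      (hint B hB C hC hCB.symm).resolve_left (Finset.card_ne_zero_of_mem hpBC)
    rw [← hcard, ← Finset.card_erase_of_mem hpBC]
    congr 1
    ext q
    simp [Finset.bipartiteAbove, and_assoc]
  · intro q hq
    obtain ⟨hqp, hqB⟩ := Finset.mem_erase.mp hq
    have hBpq : B ∈ D.blocks.filter fun C => p ∈ C ∧ q ∈ C := by simp [hB, hp, hqB]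
    refine Eq.trans ?_ ((Finset.card_erase_of_mem hBpq).trans
      (congrArg (· - 1) (D.pair_blocks p q hqp.symm)))
    congr 1
    ext C
    simp [Finset.bipartiteBelow, and_assoc]
end

section
/- Let D be a non-trivial quasi-symmetric 2-(v,k,λ) design with block intersection numbers x = 0 and y ≥ 2, with replication number r and b blocks. Then b ≤ v(v−1)/k, r ≤ v−1, and y < λ ≤ k−1. -/
/-- Fisher's inequality: sets of common size `a` with common pairwise intersection size `c < a`
have linearly independent indicator vectors, since their Gram matrix `(a - c) I + c J` is positive
definite. -/
theorem fisher {Q ι : Type*} [Fintype Q] [DecidableEq Q] [Fintype ι] (A : ι → Finset Q) (a c : ℕ)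
    (hca : c < a) (hA : ∀ i, (A i).card = a) (hI : ∀ i j, i ≠ j → (A i ∩ A j).card = c) :
    Fintype.card ι ≤ Fintype.card Q := by
  classical
  have hli : LinearIndependent ℚ (fun (i : ι) (q : Q) => if q ∈ A i then (1 : ℚ) else 0) := by
    rw [Fintype.linearIndependent_iff]
    intro g hg
    have hzero : ∀ q, ∑ i, g i * (if q ∈ A i then (1 : ℚ) else 0) = 0 := by
      intro q
      simpa using congrFun hg q
    have hgram : ∀ i j, ∑ q, (if q ∈ A i then (1 : ℚ) else 0) * (if q ∈ A j then (1 : ℚ) else 0)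
        = c + if i = j then (a - c : ℚ) else 0 := by
      intro i j
      have : ∑ q, (if q ∈ A i then (1 : ℚ) else 0) * (if q ∈ A j then (1 : ℚ) else 0)
          = (A i ∩ A j).card := by
        rw [Finset.card_eq_sum_ones, Nat.cast_sum, ← Finset.sum_filter_add_sum_filter_not
          Finset.univ (fun q => q ∈ A i ∩ A j)]
        rw [Finset.sum_eq_zero (s := Finset.univ.filter fun q => ¬ q ∈ A i ∩ A j)]
        · rw [add_zero]
          refine Finset.sum_congr (by ext; simp) ?_
          intro q hq
          simp_all
        · intro q hq
          simp only [Finset.mem_filter, Finset.mem_inter, not_and] at hq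
          by_cases h : q ∈ A i
          · simp [hq.2 h]
          · simp [h]
      rw [this]
      by_cases h : i = j
      · subst h; simp [hA]
      · simp [h, hI i j h]
    have hsq : (c : ℚ) * (∑ i, g i) ^ 2 + (a - c : ℚ) * ∑ i, g i ^ 2 = 0 := by
      calc (c : ℚ) * (∑ i, g i) ^ 2 + (a - c : ℚ) * ∑ i, g i ^ 2
          = ∑ i, ∑ j, g i * g j * (c + if i = j then (a - c : ℚ) else 0) := by
            simp only [mul_add, Finset.sum_add_distrib, mul_ite, mul_zero, Finset.sum_ite_eq,
              Finset.mem_univ, if_true]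
            rw [sq, Finset.sum_mul_sum, Finset.mul_sum, Finset.mul_sum]
            congr 1
            · refine Finset.sum_congr rfl fun i _ => ?_
              rw [Finset.mul_sum]
              exact Finset.sum_congr rfl fun j _ => by ring
            · exact Finset.sum_congr rfl fun j _ => by ring
        _ = ∑ q, (∑ i, g i * (if q ∈ A i then (1 : ℚ) else 0)) ^ 2 := by
            simp only [← hgram, sq, Finset.sum_mul_sum]
            rw [Finset.sum_comm (s := (Finset.univ : Finset Q))]
            refine Finset.sum_congr rfl fun i _ => ?_
            rw [Finset.sum_comm (s := (Finset.univ : Finset Q))]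
            refine Finset.sum_congr rfl fun j _ => ?_
            rw [Finset.mul_sum]
            exact Finset.sum_congr rfl fun q _ => by ring
        _ = 0 := Finset.sum_eq_zero fun q _ => by rw [hzero q]; norm_num
    have hac : (0 : ℚ) < a - c := by
      have : (c : ℚ) < a := by exact_mod_cast hca
      linarith
    have hsum : ∑ i, g i ^ 2 = 0 := by
      have h1 : 0 ≤ ∑ i, g i ^ 2 := Finset.sum_nonneg fun i _ => sq_nonneg _
      have h2 : 0 ≤ (c : ℚ) * (∑ i, g i) ^ 2 := by positivity
      nlinarith
    intro i
    have := (Finset.sum_eq_zero_iff_of_nonneg fun i _ => sq_nonneg (g i)).1 hsum i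
      (Finset.mem_univ i)
    exact pow_eq_zero_iff two_ne_zero |>.1 this
  simpa using hli.fintype_card_le_finrank

/-- The arithmetic behind `y < λ`. If `λ ≤ y`, put `d = y - λ` and `e = k - r`; the hypotheses give
`d (r - 1) = e (λ - 1)` and `e < d`, impossible as `λ ≤ r`. -/
theorem lt_of_counts {k l r y : ℤ} (hl : 1 ≤ l) (hy : 2 ≤ y) (hk : 1 ≤ k) (hlr : l ≤ r)
    (h1 : (k - 1) * l = (k - 1) + (r - 1) * (y - 1)) (h2 : k * l ≤ (r - 1) * y) : y < l := by
  by_contra! h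
  have hr : 1 < r := by
    by_contra! hr
    have : 0 < k * l := mul_pos (by linarith) (by linarith)
    nlinarith
  obtain ⟨d, rfl⟩ : ∃ d, y = l + d := ⟨y - l, by ring⟩
  obtain ⟨e, rfl⟩ : ∃ e, k = r + e := ⟨k - r, by ring⟩
  have hde : d * (r - 1) = e * (l - 1) := by linarith
  have hed : e < d := by nlinarith
  have hd : 0 ≤ d := by linarith
  rcases le_or_gt e 0 with he | he
  · have hd0 : d = 0 := by
      have : d * (r - 1) ≤ 0 := by rw [hde]; exact mul_nonpos_of_nonpos_of_nonneg he (by linarith)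
      nlinarith
    subst hd0
    nlinarith
  · nlinarith

/-- For a non-trivial quasi-symmetric 2-(v,k,λ) design with intersection
numbers `0` and `y ≥ 2`: `b ≤ v(v−1)/k`, `r ≤ v−1` and `y < λ ≤ k−1`. -/
theorem stmt_6 {P : Type*} [Fintype P] [DecidableEq P] {v k lam r b y : ℕ}
    (D : TwoDesign P v k lam)
    (hnt : 2 < k ∧ k < v - 1)
    (hr : ∀ p : P, (D.blocks.filter fun B => p ∈ B).card = r)
    (hb : D.blocks.card = b)
    (hy : 2 ≤ y)
    (hqs : QuasiSymmetricZero D.blocks y) :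
    (b : ℚ) ≤ (v : ℚ) * ((v : ℚ) - 1) / (k : ℚ) ∧
      r ≤ v - 1 ∧ y < lam ∧ lam ≤ k - 1 := by
  obtain ⟨hk2, hkv⟩ := hnt
  obtain ⟨hint, ⟨B₁, hB₁, B₂, hB₂, hne, hdisj⟩, ⟨C₁, hC₁, C₂, hC₂, hCne, hCy⟩⟩ := hqs
  have hcardP := D.card_points
  have hlam := D.lam_pos
  have hyk : y < k := by
    by_contra! h
    have e1 : C₁ ∩ C₂ = C₁ := Finset.eq_of_subset_of_card_le Finset.inter_subset_left
      (by rw [D.block_card _ hC₁]; omega)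
    have e2 : C₁ ∩ C₂ = C₂ := Finset.eq_of_subset_of_card_le Finset.inter_subset_right
      (by rw [D.block_card _ hC₂]; omega)
    exact hCne (e1.symm.trans e2)
  obtain ⟨p, hp⟩ : B₁.Nonempty := by
    rw [← Finset.card_pos, D.block_card _ hB₁]; omega
  have hpB₂ : p ∉ B₂ := by
    intro h
    rw [Finset.card_eq_zero] at hdisj
    have : p ∈ B₁ ∩ B₂ := Finset.mem_inter.2 ⟨hp, h⟩
    simp [hdisj] at this
  set F := D.blocks.filter fun B => p ∈ B with hF
  have hFcard : F.card = r := hr p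
  have hB₁F : B₁ ∈ F := by simp [hF, hB₁, hp]
  have hpair : ∀ q, q ≠ p → (F.filter fun B => q ∈ B).card = lam := by
    intro q hq
    rw [hF, Finset.filter_filter]
    exact D.pair_blocks p q hq.symm
  have hrpos : 1 ≤ r := by rw [← hFcard]; exact Finset.card_pos.2 ⟨_, hB₁F⟩
  have hinterF : ∀ B ∈ F, ∀ C ∈ F, B ≠ C → (B ∩ C).card = y := by
    intro B hB C hC hBC
    simp only [hF, Finset.mem_filter] at hB hC
    refine (hint B hB.1 C hC.1 hBC).resolve_left ?_
    exact (Finset.card_pos.2 ⟨p, Finset.mem_inter.2 ⟨hB.2, hC.2⟩⟩).ne'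
  have hrk : r * (k - 1) = (v - 1) * lam := by
    have h := Finset.sum_card_inter (s := Finset.univ.erase p) (B := F) (n := lam)
      (fun q hq => hpair q (Finset.ne_of_mem_erase hq))
    rw [Finset.card_erase_of_mem (Finset.mem_univ p), Finset.card_univ, hcardP] at h
    rw [← h, Finset.sum_const_nat (m := k - 1), hFcard]
    intro B hB
    simp only [hF, Finset.mem_filter] at hB
    rw [Finset.erase_inter, Finset.univ_inter, Finset.card_erase_of_mem hB.2,
      D.block_card _ hB.1]
  have hbk : b * k = v * r := by
    have h := Finset.sum_card_inter (s := Finset.univ) (B := D.blocks) (n := r)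
      (fun q _ => hr q)
    rw [Finset.card_univ, hcardP] at h
    rw [← h, Finset.sum_const_nat (m := k), hb]
    intro B hB
    rw [Finset.univ_inter, D.block_card _ hB]
  have hc1 : (k - 1) * lam = (k - 1) + (r - 1) * (y - 1) := by
    have h := Finset.sum_card_inter (s := B₁.erase p) (B := F) (n := lam)
      (fun q hq => hpair q (Finset.ne_of_mem_erase hq))
    rw [Finset.card_erase_of_mem hp, D.block_card _ hB₁] at h
    rw [← h, ← Finset.add_sum_erase _ _ hB₁F, Finset.sum_const_nat (m := y - 1),
      Finset.card_erase_of_mem hB₁F, hFcard, Finset.erase_inter, Finset.inter_self,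
      Finset.card_erase_of_mem hp, D.block_card _ hB₁]
    intro B hB
    have hB' := Finset.mem_of_mem_erase hB
    have hpB : p ∈ B := by simp only [hF, Finset.mem_filter] at hB'; exact hB'.2
    rw [Finset.erase_inter, Finset.card_erase_of_mem (Finset.mem_inter.2 ⟨hp, hpB⟩),
      hinterF _ hB₁F _ hB' (Finset.ne_of_mem_erase hB).symm]
  have hc2 : k * lam ≤ (r - 1) * y := by
    have h := Finset.sum_card_inter (s := B₂) (B := F) (n := lam)
      (fun q hq => hpair q (by rintro rfl; exact hpB₂ hq))
    rw [D.block_card _ hB₂] at h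
    rw [← h, ← Finset.add_sum_erase _ _ hB₁F, Finset.inter_comm B₂ B₁, hdisj, zero_add]
    refine (Finset.sum_le_card_nsmul _ _ y ?_).trans ?_
    · intro B hB
      have hB' := Finset.mem_of_mem_erase hB
      simp only [hF, Finset.mem_filter] at hB'
      rcases hint B₂ hB₂ B hB'.1 (by rintro rfl; exact hpB₂ hB'.2) with h | h <;> omega
    · rw [Finset.card_erase_of_mem hB₁F, hFcard, smul_eq_mul]
  -- Deleting `p` from the blocks through it leaves sets of size `k - 1` meeting pairwise in `y - 1`.
  have hrv : r ≤ v - 1 := by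
    have h := fisher (Q := {q : P // q ≠ p}) (ι := F)
      (fun B => B.1.subtype (· ≠ p)) (k - 1) (y - 1) (by omega) ?_ ?_
    · simpa [hFcard, hcardP, Fintype.card_subtype_compl] using h
    · rintro ⟨B, hB⟩
      simp only [hF, Finset.mem_filter] at hB
      rw [Finset.card_subtype, Finset.filter_ne', Finset.card_erase_of_mem hB.2,
        D.block_card _ hB.1]
    · rintro ⟨B, hB⟩ ⟨C, hC⟩ hBC
      have hy' := hinterF B hB C hC (fun h => hBC (Subtype.ext h))
      simp only [hF, Finset.mem_filter] at hB hC
      have : B.subtype (· ≠ p) ∩ C.subtype (· ≠ p) = (B ∩ C).subtype (· ≠ p) := by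
        ext; simp
      simp only [this]
      rw [Finset.card_subtype, Finset.filter_ne',
        Finset.card_erase_of_mem (Finset.mem_inter.2 ⟨hB.2, hC.2⟩), hy']
  have hlr : lam ≤ r := by
    have : (v - 1) * lam ≤ (v - 1) * r := by
      rw [← hrk, mul_comm]
      exact Nat.mul_le_mul_right _ (by omega)
    exact Nat.le_of_mul_le_mul_left this (by omega)
  refine ⟨?_, hrv, ?_, ?_⟩
  · rw [le_div_iff₀ (by exact_mod_cast (by omega : 0 < k))]
    have h1 : (b : ℚ) * k = v * r := by exact_mod_cast hbk
    have h2 : (r : ℚ) ≤ v - 1 := by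
      have : r + 1 ≤ v := by omega
      have : (r : ℚ) + 1 ≤ v := by exact_mod_cast this
      linarith
    rw [h1]
    exact mul_le_mul_of_nonneg_left h2 (by positivity)
  · zify [show 1 ≤ k by omega, show 1 ≤ y by omega, hrpos] at hc1 hc2
    have := lt_of_counts (k := k) (l := lam) (r := r) (y := y) (by omega) (by omega) (by omega)
      (by omega) hc1 hc2
    exact_mod_cast this
  · have : (v - 1) * lam ≤ (v - 1) * (k - 1) := by
      rw [← hrk]
      exact Nat.mul_le_mul_right _ hrv
    exact Nat.le_of_mul_le_mul_left this (by omega)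
end

section
/- Let D be a non-trivial quasi-symmetric 2-(v,k,λ) design with block intersection numbers x = 0 and y ≥ 2, with replication number r. Then y divides k and y divides r − λ. -/
/-- Counting the flags `(q, B)` with `q ∈ S` and `p, q ∈ B`: each `q ≠ p` contributes `λ`, and
`q = p` contributes `r`. -/
lemma sum_card_inter_through {P : Type*} [Fintype P] [DecidableEq P] {v k lam r : ℕ}
    (D : TwoDesign P v k lam)
    (hr : ∀ p : P, (D.blocks.filter fun B => p ∈ B).card = r) (S : Finset P) (p : P) :
    ∑ B ∈ D.blocks with p ∈ B, ((B ∩ S).card : ℤ)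
      = lam * S.card + if p ∈ S then (r : ℤ) - lam else 0 := by
  have h1 : ∀ B : Finset P, ((B ∩ S).card : ℤ) = ∑ q ∈ S, if q ∈ B then (1 : ℤ) else 0 := by
    intro B
    rw [Finset.sum_boole, Finset.inter_comm, Finset.filter_mem_eq_inter]
  simp_rw [h1]
  rw [Finset.sum_comm]
  have h2 : ∀ q ∈ S, (∑ B ∈ D.blocks with p ∈ B, if q ∈ B then (1 : ℤ) else 0)
      = lam + if p = q then (r : ℤ) - lam else 0 := by
    intro q _
    rw [Finset.sum_boole, Finset.filter_filter]
    split_ifs with h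
    · subst h
      simp only [and_self, hr p]
      ring
    · rw [D.pair_blocks p q h]
      ring
  rw [Finset.sum_congr rfl h2, Finset.sum_add_distrib, Finset.sum_ite_eq]
  simp [mul_comm]

lemma dvd_of_forall_pow_dvd_pow_mul {y k m : ℕ} (hy : 0 < y) (hm : m ≠ 0)
    (h : ∀ n, y ^ n ∣ k ^ n * m) : y ∣ k := by
  obtain ⟨g, y', k', hg, hco, rfl, rfl⟩ := Nat.exists_coprime' (m := y) (n := k)
    (Nat.gcd_pos_of_pos_left _ hy)
  have h' : ∀ n, y' ^ n ∣ m := by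
    intro n
    have := h n
    rw [mul_pow, mul_pow, mul_right_comm] at this
    exact (hco.pow n n).dvd_of_dvd_mul_left (Nat.dvd_of_mul_dvd_mul_right (pow_pos hg n) this)
  have hy1 : y' = 1 := by
    by_contra hne
    have hpos : 0 < y' := Nat.pos_of_mul_pos_right hy
    have := Nat.le_of_dvd (Nat.pos_of_ne_zero hm) (h' m)
    exact absurd (Nat.lt_pow_self (show 1 < y' by omega) (n := m)) (by omega)
  subst hy1
  simp

/-- An integer function on the blocks summing to zero over the blocks through each point is an
eigenfunction of the block graph with eigenvalue `-k / y`; iterating the adjacency operator, which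
preserves integrality, gives the divisibility. -/
lemma pow_dvd_of_sum_through_eq_zero {P : Type*} [Fintype P] [DecidableEq P] {v k lam y : ℕ}
    (D : TwoDesign P v k lam) (hqs : QuasiSymmetricZero D.blocks y) (c : Finset P → ℤ)
    (hc : ∀ p, ∑ B ∈ D.blocks with p ∈ B, c B = 0) (n : ℕ) :
    ∀ C ∈ D.blocks, (y : ℤ) ^ n ∣ (k : ℤ) ^ n * c C := by
  induction n with
  | zero => simp
  | succ n ih =>
    intro C hC
    have h0 : ∑ B ∈ D.blocks, ((B ∩ C).card : ℤ) * c B = 0 := by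
      have h1 : ∀ B ∈ D.blocks, ((B ∩ C).card : ℤ) * c B
          = ∑ p ∈ C, if p ∈ B then c B else 0 := by
        intro B _
        rw [← Finset.sum_filter, Finset.sum_const, Finset.filter_mem_eq_inter,
          Finset.inter_comm, nsmul_eq_mul]
      rw [Finset.sum_congr rfl h1, Finset.sum_comm]
      refine Finset.sum_eq_zero fun p _ => ?_
      rw [← Finset.sum_filter, hc p]
    rw [← Finset.add_sum_erase _ _ hC, Finset.inter_self, D.block_card C hC] at h0
    have h2 : (k : ℤ) ^ (n + 1) * c C
        = -∑ B ∈ D.blocks.erase C, ((B ∩ C).card : ℤ) * ((k : ℤ) ^ n * c B) := by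
      have h3 : ∑ B ∈ D.blocks.erase C, ((B ∩ C).card : ℤ) * ((k : ℤ) ^ n * c B)
          = (k : ℤ) ^ n * ∑ B ∈ D.blocks.erase C, ((B ∩ C).card : ℤ) * c B := by
        rw [Finset.mul_sum]
        exact Finset.sum_congr rfl fun _ _ => by ring
      rw [h3]
      linear_combination (k : ℤ) ^ n * h0
    rw [h2, dvd_neg]
    refine Finset.dvd_sum fun B hB => ?_
    obtain ⟨hne, hB⟩ := Finset.mem_erase.1 hB
    rw [pow_succ']
    refine mul_dvd_mul ?_ (ih B hB)
    rcases hqs.1 B hB C hC hne with h | h <;> simp [h]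

/-- For a non-trivial quasi-symmetric 2-(v,k,λ) design with intersection
numbers `0` and `y ≥ 2`: `y ∣ k` and `y ∣ r − λ`. -/
theorem stmt_7 {P : Type*} [Fintype P] [DecidableEq P] {v k lam r y : ℕ}
    (D : TwoDesign P v k lam)
    (hnt : 2 < k ∧ k < v - 1)
    (hr : ∀ p : P, (D.blocks.filter fun B => p ∈ B).card = r)
    (hy : 2 ≤ y)
    (hqs : QuasiSymmetricZero D.blocks y) :
    y ∣ k ∧ y ∣ (r - lam) := by
  obtain ⟨B₁, hB₁, B₂, hB₂, hne, h12⟩ := hqs.2.1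
  have hk1 := D.block_card B₁ hB₁
  have hyk : y ∣ k := by
    set c : Finset P → ℤ := fun B =>
      r * (B ∩ B₁).card - (if B₁ = B then (r : ℤ) * (r - lam) else 0) - lam * k with hcdef
    have hc : ∀ p, ∑ B ∈ D.blocks with p ∈ B, c B = 0 := by
      intro p
      simp only [hcdef, Finset.sum_sub_distrib]
      rw [← Finset.mul_sum, sum_card_inter_through D hr, Finset.sum_ite_eq, Finset.sum_const,
        hr p, hk1, nsmul_eq_mul]
      simp only [Finset.mem_filter, hB₁, true_and]
      split_ifs <;> ring
    have hc2 : c B₂ = -((lam * k : ℕ) : ℤ) := by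
      rw [Finset.inter_comm] at h12
      simp [hcdef, h12, hne]
    refine dvd_of_forall_pow_dvd_pow_mul (m := lam * k) (by omega)
      (Nat.mul_ne_zero D.lam_pos.ne' (by omega)) fun n => ?_
    have := pow_dvd_of_sum_through_eq_zero D hqs c hc n B₂ hB₂
    rw [hc2, mul_neg, dvd_neg] at this
    exact_mod_cast this
  refine ⟨hyk, ?_⟩
  -- For `r ≤ lam` the truncated difference is `0`.
  rcases le_total r lam with hle | hle
  · simp [Nat.sub_eq_zero_of_le hle]
  obtain ⟨p, hp⟩ : B₁.Nonempty := Finset.card_pos.1 (by omega)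
  have hsum := sum_card_inter_through D hr B₁ p
  rw [if_pos hp, hk1] at hsum
  have hdvd : (y : ℤ) ∣ ∑ B ∈ D.blocks with p ∈ B, ((B ∩ B₁).card : ℤ) := by
    refine Finset.dvd_sum fun B hB => ?_
    have hB := (Finset.mem_filter.1 hB).1
    by_cases h : B = B₁
    · subst h
      rw [Finset.inter_self, hk1]
      exact_mod_cast hyk
    · rcases hqs.1 B hB B₁ hB₁ h with h | h <;> simp [h]
  rw [hsum] at hdvd
  have hlk : (y : ℤ) ∣ lam * k := Dvd.dvd.mul_left (by exact_mod_cast hyk) _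
  have := (dvd_add_right hlk).1 hdvd
  rw [← Nat.cast_sub hle] at this
  exact_mod_cast this
end

section
/- Let D be a non-trivial quasi-symmetric 2-(v,k,λ) design with block intersection numbers x = 0 and y ≥ 2. Then v < (k² − k)/(y − 1). -/
/-- Flag counting at a point `p`: over the blocks through `p`, the traces on a point set `T`
avoiding `p` have total size `λ |T|`. -/
theorem TwoDesign.sum_card_inter {P : Type*} [Fintype P] [DecidableEq P] {v k lam : ℕ}
    (D : TwoDesign P v k lam) (p : P) (T : Finset P) (hp : p ∉ T) :
    ∑ C ∈ D.blocks.filter (p ∈ ·), (T ∩ C).card = T.card * lam := by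
  have h := Finset.sum_card_bipartiteAbove_eq_sum_card_bipartiteBelow
    (s := D.blocks.filter (p ∈ ·)) (t := T) (fun C q => q ∈ C)
  simp only [Finset.bipartiteAbove, Finset.bipartiteBelow, Finset.filter_mem_eq_inter,
    Finset.filter_filter] at h
  rw [h, ← smul_eq_mul, ← Finset.sum_const]
  refine Finset.sum_congr rfl fun q hq => D.pair_blocks p q ?_
  rintro rfl
  exact hp hq

/-- For a non-trivial quasi-symmetric 2-(v,k,λ) design with intersection
numbers `0` and `y ≥ 2`: `v < (k² − k)/(y − 1)`. -/
theorem stmt_8 {P : Type*} [Fintype P] [DecidableEq P] {v k lam y : ℕ}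
    (D : TwoDesign P v k lam)
    (hnt : 2 < k ∧ k < v - 1)
    (hy : 2 ≤ y)
    (hqs : QuasiSymmetricZero D.blocks y) :
    (v : ℚ) < ((k : ℚ) ^ 2 - (k : ℚ)) / ((y : ℚ) - 1) := by
  obtain ⟨hmeet, -, B, hB, B', hB', hne, hBB'⟩ := hqs
  have hBk := D.block_card B hB
  have hyk : y < k := by
    rw [← hBB', ← hBk]
    refine Finset.card_lt_card (Finset.ssubset_iff_subset_ne.2 ⟨Finset.inter_subset_left, ?_⟩)
    intro h
    exact hne (Finset.eq_of_subset_of_card_le (Finset.inter_eq_left.1 h)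
      (by rw [hBk, D.block_card B' hB']))
  obtain ⟨p, hpB⟩ : B.Nonempty := Finset.card_pos.1 (by omega)
  set S := D.blocks.filter (p ∈ ·) with hS
  have hBS : B ∈ S := Finset.mem_filter.2 ⟨hB, hpB⟩
  have hall : S.card * (k - 1) = (v - 1) * lam := by
    have h := D.sum_card_inter p (Finset.univ.erase p) (Finset.notMem_erase _ _)
    rw [Finset.card_erase_of_mem (Finset.mem_univ p), Finset.card_univ, D.card_points] at h
    rw [← h, ← smul_eq_mul, ← Finset.sum_const]
    refine Finset.sum_congr rfl fun C hC => ?_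
    obtain ⟨hC, hpC⟩ := Finset.mem_filter.1 hC
    rw [Finset.erase_inter, Finset.univ_inter, Finset.card_erase_of_mem hpC, D.block_card C hC]
  have hloc : (k - 1) + (S.card - 1) * (y - 1) = (k - 1) * lam := by
    have h := D.sum_card_inter p (B.erase p) (Finset.notMem_erase _ _)
    rw [Finset.card_erase_of_mem hpB, hBk] at h
    rw [← h, ← Finset.add_sum_erase _ _ hBS, Finset.erase_inter, Finset.inter_self,
      Finset.card_erase_of_mem hpB, hBk, ← Finset.card_erase_of_mem hBS, ← smul_eq_mul,
      ← Finset.sum_const]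
    congr 1
    refine Finset.sum_congr rfl fun C hC => ?_
    obtain ⟨hCB, hC⟩ := Finset.mem_erase.1 hC
    obtain ⟨hC, hpC⟩ := Finset.mem_filter.1 hC
    have hp : p ∈ B ∩ C := Finset.mem_inter.2 ⟨hpB, hpC⟩
    rw [Finset.erase_inter, Finset.card_erase_of_mem hp]
    rcases hmeet B hB C hC hCB.symm with h0 | h0
    · exact absurd hp (by simp [Finset.card_eq_zero.1 h0])
    · rw [h0]
  have hr : 1 ≤ S.card := Finset.card_pos.2 ⟨B, hBS⟩
  have hlam := D.lam_pos
  generalize S.card = r at hall hloc hr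
  obtain ⟨hk, hv⟩ := hnt
  have hk1 : 1 ≤ k := by omega
  have hv1 : 1 ≤ v := by omega
  have hy1 : 1 ≤ y := by omega
  have e1 : (r : ℚ) * (k - 1) = (v - 1) * lam := by
    have := congrArg (Nat.cast : ℕ → ℚ) hall
    push_cast [hk1, hv1] at this
    exact this
  have e2 : ((k : ℚ) - 1) + (r - 1) * (y - 1) = (k - 1) * lam := by
    have := congrArg (Nat.cast : ℕ → ℚ) hloc
    push_cast [hk1, hr, hy1] at this
    exact this
  have hlamQ : (0 : ℚ) < lam := by exact_mod_cast hlam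
  have hykQ : (0 : ℚ) < k - y := sub_pos.2 (by exact_mod_cast hyk)
  have hkQ : (0 : ℚ) < lam + (k - 1) := by
    have : (1 : ℚ) ≤ k := by exact_mod_cast hk1
    linarith
  have hyQ : (0 : ℚ) < y - 1 := sub_pos.2 (by exact_mod_cast hy)
  rw [lt_div_iff₀ hyQ]
  have key : (lam : ℚ) * ((k ^ 2 - k) - v * (y - 1)) = (k - y) * (lam + (k - 1)) := by
    linear_combination (y - 1 : ℚ) * e1 - (k - 1 : ℚ) * e2
  have := pos_of_mul_pos_right (key ▸ mul_pos hykQ hkQ) hlamQ.le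
  linarith
end

section
/- Let D be a non-trivial quasi-symmetric 2-(v,k,λ) design with block intersection numbers x = 0 and y ≥ 2, with replication number r. Then (y−1)·r²/λ² < v − 1 < 2(y−1)·r²/λ²; in particular v ≤ 2(y−1)·(r/gcd(r,λ))². -/
/-- Double counting of the pairs `(q, B)` with `p, q ∈ B`, `q ≠ p`, for a fixed point `p`. -/
lemma TwoDesign.r_mul_pred {P : Type*} [Fintype P] [DecidableEq P] {v k lam r : ℕ}
    (D : TwoDesign P v k lam) (p : P)
    (hr : (D.blocks.filter fun B => p ∈ B).card = r) :
    r * (k - 1) = (v - 1) * lam := by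
  have h := Finset.sum_card_bipartiteAbove_eq_sum_card_bipartiteBelow
    (s := Finset.univ.erase p) (t := D.blocks.filter fun B => p ∈ B) (fun q B => q ∈ B)
  rw [Finset.sum_const_nat (m := lam), Finset.sum_const_nat (m := k - 1),
    Finset.card_erase_of_mem (Finset.mem_univ p), Finset.card_univ, D.card_points, hr] at h
  · exact h.symm
  · intro B hB
    rw [Finset.mem_filter] at hB
    rw [← D.block_card B hB.1, ← Finset.card_erase_of_mem hB.2]
    congr 1
    ext q
    simp [Finset.bipartiteBelow]
  · intro q hq
    rw [Finset.bipartiteAbove, Finset.filter_filter]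
    exact D.pair_blocks p q (Finset.ne_of_mem_erase hq).symm

/-- The sum of the intersection sizes of a set `B` with all blocks. -/
lemma TwoDesign.sum_inter {P : Type*} [Fintype P] [DecidableEq P] {v k lam r : ℕ}
    (D : TwoDesign P v k lam)
    (hr : ∀ p : P, (D.blocks.filter fun B => p ∈ B).card = r) (B : Finset P) :
    ∑ B' ∈ D.blocks, (B ∩ B').card = B.card * r := by
  have h := Finset.sum_card_bipartiteAbove_eq_sum_card_bipartiteBelow
    (s := B) (t := D.blocks) (fun q B' => q ∈ B')
  rw [← Finset.sum_const_nat (m := r) (fun q _ => hr q)]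
  refine Eq.trans ?_ h.symm
  refine Finset.sum_congr rfl fun B' _ => ?_
  rw [Finset.bipartiteBelow, Finset.filter_mem_eq_inter]

/-- The number of ordered pairs of distinct points of `B ∩ B'`, summed over all blocks `B'`. -/
lemma TwoDesign.sum_offDiag_inter {P : Type*} [Fintype P] [DecidableEq P] {v k lam : ℕ}
    (D : TwoDesign P v k lam) (B : Finset P) :
    ∑ B' ∈ D.blocks, (B ∩ B').offDiag.card = B.offDiag.card * lam := by
  have h := Finset.sum_card_bipartiteAbove_eq_sum_card_bipartiteBelow
    (s := B.offDiag) (t := D.blocks) (fun q B' => q.1 ∈ B' ∧ q.2 ∈ B')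
  rw [← Finset.sum_const_nat (m := lam)
    (fun q hq => D.pair_blocks q.1 q.2 (Finset.mem_offDiag.1 hq).2.2)]
  refine Eq.trans ?_ h.symm
  refine Finset.sum_congr rfl fun B' _ => ?_
  congr 1
  ext q
  simp only [Finset.bipartiteBelow, Finset.mem_offDiag, Finset.mem_inter, Finset.mem_filter]
  tauto

lemma cast_card_offDiag {P : Type*} [DecidableEq P] (s : Finset P) :
    (s.offDiag.card : ℚ) = s.card * (s.card - 1) := by
  rw [Finset.offDiag_card, Nat.cast_sub (Nat.le_mul_self _)]
  push_cast
  ring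

/-- The parameter identity forced by the intersection numbers `0` and `y`. -/
lemma TwoDesign.quasiSymmetric_identity {P : Type*} [Fintype P] [DecidableEq P]
    {v k lam r y : ℕ} (D : TwoDesign P v k lam) (hk : 0 < k)
    (hr : ∀ p : P, (D.blocks.filter fun B => p ∈ B).card = r)
    (hqs : QuasiSymmetricZero D.blocks y) :
    ((k : ℚ) - 1) * (lam - 1) = (y - 1) * (r - 1) := by
  obtain ⟨h0, ⟨B, hB, -⟩, -⟩ := hqs
  have h1 : ∑ B' ∈ D.blocks, ((B ∩ B').card : ℚ) = k * r := by
    have := D.sum_inter hr B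
    rw [D.block_card B hB] at this
    exact_mod_cast this
  have h2 : ∑ B' ∈ D.blocks, ((B ∩ B').card : ℚ) * ((B ∩ B').card - 1) =
      k * (k - 1) * lam := by
    have := congrArg (Nat.cast (R := ℚ)) (D.sum_offDiag_inter B)
    simpa only [Nat.cast_sum, Nat.cast_mul, cast_card_offDiag, D.block_card B hB] using this
  rw [← Finset.add_sum_erase _ _ hB, Finset.inter_self, D.block_card B hB] at h1 h2
  have h3 : ∑ B' ∈ D.blocks.erase B, ((B ∩ B').card : ℚ) * ((B ∩ B').card - 1) =
      (y - 1) * ∑ B' ∈ D.blocks.erase B, ((B ∩ B').card : ℚ) := by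
    rw [Finset.mul_sum]
    refine Finset.sum_congr rfl fun B' hB' => ?_
    rw [Finset.mem_erase] at hB'
    rcases h0 B hB B' hB'.2 hB'.1.symm with h | h <;> rw [h]
    · simp
    · ring
  have hk' : (k : ℚ) ≠ 0 := by positivity
  apply mul_left_cancel₀ hk'
  linear_combination h3 - h2 + ((y : ℚ) - 1) * h1

/-- Two blocks meeting in `y ≥ 2` points share a pair of points. -/
lemma TwoDesign.two_le_lam {P : Type*} [Fintype P] [DecidableEq P]
    {v k lam y : ℕ} (D : TwoDesign P v k lam) (hy : 2 ≤ y)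
    (hqs : QuasiSymmetricZero D.blocks y) : 2 ≤ lam := by
  obtain ⟨-, -, B₁, h₁, B₂, h₂, hne, hc⟩ := hqs
  obtain ⟨p, hp, q, hq, hpq⟩ := Finset.one_lt_card.1 (show 1 < (B₁ ∩ B₂).card by omega)
  rw [Finset.mem_inter] at hp hq
  rw [← D.pair_blocks p q hpq]
  exact Finset.one_lt_card.2 ⟨B₁, by simp [*], B₂, by simp [*], hne⟩

/-- For a non-trivial quasi-symmetric 2-(v,k,λ) design with intersection
numbers `0` and `y ≥ 2`: `(y−1)·r²/λ² < v − 1 < 2(y−1)·r²/λ²`; in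
particular `v ≤ 2(y−1)·(r/gcd(r,λ))²`. -/
theorem stmt_9 {P : Type*} [Fintype P] [DecidableEq P] {v k lam r y : ℕ}
    (D : TwoDesign P v k lam)
    (hnt : 2 < k ∧ k < v - 1)
    (hr : ∀ p : P, (D.blocks.filter fun B => p ∈ B).card = r)
    (hy : 2 ≤ y)
    (hqs : QuasiSymmetricZero D.blocks y) :
    (((y : ℚ) - 1) * (r : ℚ) ^ 2 / (lam : ℚ) ^ 2 < (v : ℚ) - 1 ∧
      (v : ℚ) - 1 < 2 * ((y : ℚ) - 1) * (r : ℚ) ^ 2 / (lam : ℚ) ^ 2) ∧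
    v ≤ 2 * (y - 1) * (r / Nat.gcd r lam) ^ 2 := by
  obtain ⟨hk, hkv⟩ := hnt
  have hlam := D.two_le_lam hy hqs
  have hid := D.quasiSymmetric_identity (by omega) hr hqs
  have hcard := D.card_points
  obtain ⟨p⟩ : Nonempty P := Fintype.card_pos_iff.1 (by omega)
  have hrk := D.r_mul_pred p (hr p)
  have hlr : lam < r := by
    by_contra! h
    have h1 : r * (k - 1) ≤ lam * (k - 1) := Nat.mul_le_mul_right _ h
    have h2 : lam * (k - 1) < lam * (v - 1) :=
      Nat.mul_lt_mul_of_pos_left (by omega) (by omega)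
    rw [hrk, mul_comm] at h1
    omega
  have hrk' : (r : ℚ) * (k - 1) = (v - 1) * lam := by
    have := congrArg (Nat.cast (R := ℚ)) hrk
    rwa [Nat.cast_mul, Nat.cast_mul, Nat.cast_pred (by omega), Nat.cast_pred (by omega)] at this
  have hyQ : (0 : ℚ) < y - 1 := by
    have : (2 : ℚ) ≤ y := by exact_mod_cast hy
    linarith
  have hlQ : (2 : ℚ) ≤ lam := by exact_mod_cast hlam
  have hlrQ : (lam : ℚ) < r := by exact_mod_cast hlr
  have hr0 : (0 : ℚ) < r := by linarith
  have hl0 : (0 : ℚ) < lam := by linarith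
  have hl1 : (0 : ℚ) < lam - 1 := by linarith
  have hv : (v : ℚ) - 1 = (y - 1) * r * (r - 1) / (lam * (lam - 1)) := by
    rw [eq_div_iff (by positivity)]
    linear_combination (r : ℚ) * hid - ((lam : ℚ) - 1) * hrk'
  have hlow : ((y : ℚ) - 1) * (r : ℚ) ^ 2 / (lam : ℚ) ^ 2 < (v : ℚ) - 1 := by
    rw [hv, div_lt_div_iff₀ (by positivity) (by positivity)]
    have h : 0 < ((y : ℚ) - 1) * r * lam * (r - lam) :=
      mul_pos (by positivity) (by linarith)
    linarith
  have hup : (v : ℚ) - 1 < 2 * ((y : ℚ) - 1) * (r : ℚ) ^ 2 / (lam : ℚ) ^ 2 := by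
    rw [hv, div_lt_div_iff₀ (by positivity) (by positivity)]
    have h' : 0 < (r : ℚ) * (lam - 2) + lam := by
      have : 0 ≤ (r : ℚ) * (lam - 2) := mul_nonneg hr0.le (by linarith)
      linarith
    have h : 0 < ((y : ℚ) - 1) * r * lam * (r * (lam - 2) + lam) := by positivity
    linarith
  refine ⟨⟨hlow, hup⟩, ?_⟩
  set s := r / Nat.gcd r lam with hs
  have hrs : r ≤ s * lam := by
    calc r = s * Nat.gcd r lam := (Nat.div_mul_cancel (Nat.gcd_dvd_left r lam)).symm
      _ ≤ s * lam := Nat.mul_le_mul_left _ (Nat.gcd_le_right _ (by omega))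
  have hrsQ : (r : ℚ) / lam ≤ s := by
    rw [div_le_iff₀ hl0]
    exact_mod_cast hrs
  have hfin : (v : ℚ) - 1 < 2 * (y - 1) * (s : ℚ) ^ 2 := by
    calc (v : ℚ) - 1 < 2 * ((y : ℚ) - 1) * (r : ℚ) ^ 2 / (lam : ℚ) ^ 2 := hup
      _ = 2 * ((y : ℚ) - 1) * ((r : ℚ) / lam) ^ 2 := by rw [div_pow, mul_div_assoc]
      _ ≤ 2 * (y - 1) * (s : ℚ) ^ 2 := by gcongr
  have hlt : (v : ℚ) < ((2 * (y - 1) * s ^ 2 + 1 : ℕ) : ℚ) := by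
    push_cast [Nat.cast_sub (show 1 ≤ y by omega)]
    linarith
  exact Nat.lt_succ_iff.1 (by exact_mod_cast hlt)
end

section
/- There do not exist positive integers k and q such that 4 divides k, k divides q³ + 1, and k² − 5k + 13 = 3q³. -/
/-- There are no positive integers `k, q` such that `4 ∣ k`,
`k ∣ q³ + 1` and `k² − 5k + 13 = 3q³`. -/
theorem stmt_15 :
    ¬ ∃ k q : ℤ, 0 < k ∧ 0 < q ∧ 4 ∣ k ∧ k ∣ q ^ 3 + 1 ∧
      k ^ 2 - 5 * k + 13 = 3 * q ^ 3 := by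
  rintro ⟨k, q, hk, hq, h4, ⟨c, hc⟩, h⟩
  -- The equation reads `3 (q³ + 1) = k² - 5k + 16`, and `k` divides the left side.
  have h16 : k ∣ 16 := ⟨3 * c - k + 5, by linarith⟩
  have hle : k ≤ 16 := Int.le_of_dvd (by norm_num) h16
  -- For `0 < k ≤ 16`, `k² - 5k + 13` is at most `189 = 3 * 63`, so `q³ ≤ 63 < 4³`.
  have hq4 : q < 4 := by
    by_contra! hge
    have : (4 : ℤ) ^ 3 ≤ q ^ 3 := by gcongr
    nlinarith
  interval_cases q <;> interval_cases k <;> omega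
end

section
/- There do not exist positive integers k and q such that 10 divides k, k divides q³ + 1, and k² − 11k + 91 = 9q³. -/
/-- There are no positive integers `k, q` such that `10 ∣ k`,
`k ∣ q³ + 1` and `k² − 11k + 91 = 9q³`. -/
theorem stmt_16 :
    ¬ ∃ k q : ℤ, 0 < k ∧ 0 < q ∧ 10 ∣ k ∧ k ∣ q ^ 3 + 1 ∧
      k ^ 2 - 11 * k + 91 = 9 * q ^ 3 := by
  rintro ⟨k, q, hk, hq, ⟨c, rfl⟩, ⟨d, hd⟩, h⟩
  -- Adding 9 to both sides of the equation gives `9 (q³ + 1) = k² - 11 k + 100`.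
  have h100 : 10 * c ∣ 100 := ⟨9 * d - 10 * c + 11, by linear_combination 9 * hd + h⟩
  have hle : 10 * c ≤ 100 := Int.le_of_dvd (by norm_num) h100
  have hc0 : 0 < c := by omega
  have hc : c ≤ 10 := by omega
  -- The equation now gives `9 q³ ≤ 8991`, so `q < 10`.
  have hq10 : q < 10 := by
    by_contra! hge
    have : (10 : ℤ) ^ 3 ≤ q ^ 3 := by gcongr
    nlinarith
  clear hd h100 hle hk
  interval_cases c <;> interval_cases q <;> omega
end

section
/- For every integer q, the greatest common divisor of q¹²(q⁸ − 1)(q⁴ − 1) − 3 and 3q¹²(q⁸ + q⁴ + 1)(q⁶ − 1)(q² − 1) divides 549·(q⁸ + q⁴ + 1). -/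
/-!
Put `x = q²` and `S = x⁴ + x² + 1`. The first number equals `S * P` with
`P = x⁸ - 2x⁶ + 3x² - 3`, and the second equals `S * C` with
`C = 3 * x⁶ * (x² + x + 1) * (x - 1)²`. So it suffices that `549` lies in the ideal `(P, C)`.
Modulo `P`, some multiples of `x⁶`, `(x - 1)²` and `x² + x + 1` are congruent to `3`, `1` and `61`
respectively; multiplying these congruences together with the factor `3` of `C` gives a multiple
of `C` congruent to `3 * 3 * 1 * 61 = 549`.
-/

/-- The Bézout relation left after cancelling `x⁴ + x² + 1` from both numbers, with `x = q²`. -/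
lemma exists_bezout_549 (x : ℤ) :
    ∃ f g : ℤ, f * (x ^ 8 - 2 * x ^ 6 + 3 * x ^ 2 - 3) +
      g * (3 * x ^ 6 * (x ^ 2 + x + 1) * (x - 1) ^ 2) = 549 := by
  set P := x ^ 8 - 2 * x ^ 6 + 3 * x ^ 2 - 3 with hP
  have h₁ : x ^ 6 * (x ^ 6 - x ^ 4 - x ^ 2 + 1) ≡ 3 [ZMOD P] :=
    (Int.modEq_iff_dvd.2 ⟨-(x ^ 4 + x ^ 2 + 1), by rw [hP]; ring⟩)
  -- `P ≡ 2(x - 1) - 1` modulo `(x - 1)²`, with inverse `-(2x - 1)`.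
  have h₂ : (x - 1) ^ 2 *
      (2 * x ^ 7 + 3 * x ^ 6 - x ^ 4 - 2 * x ^ 3 - 3 * x ^ 2 + 2 * x + 4) ≡ 1 [ZMOD P] :=
    (Int.modEq_iff_dvd.2 ⟨-(2 * x - 1), by rw [hP]; ring⟩)
  -- `P ≡ -4x - 9` modulo `x² + x + 1`, an element of norm `61` with conjugate `4x - 5`.
  have h₃ : (x ^ 2 + x + 1) * (-4 * x ^ 7 + 9 * x ^ 6 + 3 * x ^ 5 - 22 * x ^ 4 + 19 * x ^ 3
      + 3 * x ^ 2 - 34 * x + 46) ≡ 61 [ZMOD P] :=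
    (Int.modEq_iff_dvd.2 ⟨4 * x - 5, by rw [hP]; ring⟩)
  obtain ⟨k, hk⟩ := Int.modEq_iff_dvd.1 (((h₁.mul h₂).mul h₃).mul_left 3)
  refine ⟨k, (x ^ 6 - x ^ 4 - x ^ 2 + 1) *
    (2 * x ^ 7 + 3 * x ^ 6 - x ^ 4 - 2 * x ^ 3 - 3 * x ^ 2 + 2 * x + 4) *
    (-4 * x ^ 7 + 9 * x ^ 6 + 3 * x ^ 5 - 22 * x ^ 4 + 19 * x ^ 3
      + 3 * x ^ 2 - 34 * x + 46), ?_⟩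
  clear_value P
  linear_combination -hk

/-- For every integer `q`, the gcd of `q¹²(q⁸ − 1)(q⁴ − 1) − 3` and
`3q¹²(q⁸ + q⁴ + 1)(q⁶ − 1)(q² − 1)` divides `549(q⁸ + q⁴ + 1)`. -/
theorem stmt_17 (q : ℤ) :
    (Int.gcd (q ^ 12 * (q ^ 8 - 1) * (q ^ 4 - 1) - 3)
      (3 * q ^ 12 * (q ^ 8 + q ^ 4 + 1) * (q ^ 6 - 1) * (q ^ 2 - 1)) : ℤ) ∣
      549 * (q ^ 8 + q ^ 4 + 1) := by
  obtain ⟨f, g, h⟩ := exists_bezout_549 (q ^ 2)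
  have key : 549 * (q ^ 8 + q ^ 4 + 1) =
      f * (q ^ 12 * (q ^ 8 - 1) * (q ^ 4 - 1) - 3) +
      g * (3 * q ^ 12 * (q ^ 8 + q ^ 4 + 1) * (q ^ 6 - 1) * (q ^ 2 - 1)) := by
    linear_combination -(q ^ 8 + q ^ 4 + 1) * h
  rw [key]
  exact dvd_add ((Int.gcd_dvd_left ..).mul_left f) ((Int.gcd_dvd_right ..).mul_left g)
end
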